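/- Let M ∈ ℂ^{s×n} with s ≤ n have full row rank s. Then the set of real matrices Y ∈ ℝ^{n×s} for which the s×s complex matrix M·Y is singular (det(MY) = 0) has Lebesgue measure zero in ℝ^{n×s} ≅ ℝ^{ns}. -/

import Mathlib

open Matrix MeasureTheory

theorem stmt2_eval {s : ℕ} (A B : Matrix (Fin s) (Fin s) ℂ) (z : ℂ) :
    ((Polynomial.X : Polynomial ℂ) • A.map Polynomial.C + B.map Polynomial.C).det.eval z
      = (z • A + B).det := by
  rw [← Polynomial.coe_evalRingHom, RingHom.map_det]
  congr 1
  ext i j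
  simp
  exact mul_comm _ _

theorem stmt2_exists (n s : ℕ) (M : Matrix (Fin s) (Fin n) ℂ) (hM : M.rank = s) :
    ∃ Y : Fin n → Fin s → ℝ, (M * (Matrix.of Y).map (fun x : ℝ => (x : ℂ))).det ≠ 0 := by
  have hsurj : Function.Surjective M.mulVec := by
    have : LinearMap.range M.mulVecLin = ⊤ := by
      apply Submodule.eq_top_of_finrank_eq
      rw [← Matrix.rank, hM]; simp
    exact LinearMap.range_eq_top.1 this
  obtain ⟨N, hN⟩ := Matrix.mulVec_surjective_iff_exists_right_inverse.1 hsurj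
  set A : Matrix (Fin n) (Fin s) ℂ := N.map (fun z => ((z.re : ℝ) : ℂ)) with hA
  set B : Matrix (Fin n) (Fin s) ℂ := N.map (fun z => ((z.im : ℝ) : ℂ)) with hB
  set P := ((Polynomial.X : Polynomial ℂ) • (M * B).map Polynomial.C
    + (M * A).map Polynomial.C).det with hP
  have hP0 : P ≠ 0 := by
    intro h
    have h1 := stmt2_eval (M * B) (M * A) Complex.I
    rw [← hP, h] at h1
    have h2 : Complex.I • (M * B) + M * A = 1 := by
      rw [← hN, ← Matrix.mul_smul, ← Matrix.mul_add]
      congr 1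
      ext i j
      simp only [hA, hB, Matrix.add_apply, Matrix.smul_apply, Matrix.map_apply, smul_eq_mul]
      rw [add_comm, mul_comm, Complex.re_add_im]
    rw [h2] at h1
    simp at h1
  have hfin : {t : ℝ | P.eval (t : ℂ) = 0}.Finite :=
    (Polynomial.finite_setOfPred_isRoot hP0).preimage Complex.ofReal_injective.injOn
  obtain ⟨t, ht⟩ := hfin.infinite_compl.nonempty
  refine ⟨fun i j => t * (N i j).im + (N i j).re, ?_⟩
  intro h
  apply ht
  change P.eval (t : ℂ) = 0
  rw [hP, stmt2_eval, ← Matrix.mul_smul, ← Matrix.mul_add, ← h]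
  congr 2
  ext i j
  simp [hA, hB]

/-- Let `M ∈ ℂ^{s×n}` with `s ≤ n` have full row rank `s`. Then the
set of real matrices `Y ∈ ℝ^{n×s}` for which the `s×s` complex matrix `M·Y` is
singular has Lebesgue measure zero in `ℝ^{n×s} ≅ ℝ^{ns}`. -/
theorem stmt_2 (n s : ℕ) (hs : s ≤ n) (M : Matrix (Fin s) (Fin n) ℂ)
    (hM : M.rank = s) :
    volume {Y : Fin n → Fin s → ℝ |
      (M * (Matrix.of Y).map (fun x : ℝ => (x : ℂ))).det = 0} = 0 := by
  obtain ⟨Y₀, hY₀⟩ := stmt2_exists n s M hM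
  have hcont : Continuous (fun Y : Fin n → Fin s → ℝ =>
      (M * (Matrix.of Y).map (fun x : ℝ => (x : ℂ))).det) := by
    apply Continuous.matrix_det
    apply Continuous.matrix_mul continuous_const
    apply Continuous.matrix_map (f := fun x : ℝ => (x : ℂ)) _ Complex.continuous_ofReal
    exact continuous_id
  have hmeas : MeasurableSet {Y : Fin n → Fin s → ℝ |
      (M * (Matrix.of Y).map (fun x : ℝ => (x : ℂ))).det = 0}ᶜ :=
    ((isClosed_singleton (x := (0 : ℂ))).preimage hcont).measurableSet.compl
  have key := ae_mem_of_ae_add_linearMap_mem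
    (LinearMap.toSpanSingleton ℝ (Fin n → Fin s → ℝ) Y₀)
    (volume : Measure ℝ) (volume : Measure (Fin n → Fin s → ℝ)) hmeas ?_
  · rw [ae_iff] at key
    simpa using key
  intro Y
  set A := M * (Matrix.of Y₀).map (fun x : ℝ => (x : ℂ)) with hA
  set B := M * (Matrix.of Y).map (fun x : ℝ => (x : ℂ)) with hB
  set P := ((Polynomial.X : Polynomial ℂ) • A.map Polynomial.C + B.map Polynomial.C).det with hP
  have hP0 : P ≠ 0 := by
    intro h
    have h1 := Polynomial.coeff_det_X_add_C_card A B
    rw [← hP, h] at h1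
    exact hY₀ (by simpa using h1.symm)
  have hfin : {t : ℝ | P.eval (t : ℂ) = 0}.Finite :=
    (Polynomial.finite_setOfPred_isRoot hP0).preimage Complex.ofReal_injective.injOn
  rw [ae_iff]
  refine measure_mono_null ?_ (hfin.measure_zero volume)
  intro t ht
  have ht' : (M * (Matrix.of (Y + t • Y₀)).map (fun x : ℝ => (x : ℂ))).det = 0 := by
    simpa using ht
  change P.eval (t : ℂ) = 0
  rw [hP, stmt2_eval, hA, hB, ← Matrix.mul_smul, ← Matrix.mul_add, ← ht']
  congr 2
  ext i j
  simp [add_comm]
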